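/- Assume the curve setup with counterclockwise orientation. Then for every s ∈ ℝ: (i) ∫₀^L K(s,t) dt = −π, where K(s,t) = ((l(s) − l(t))·n(t))/‖l(s) − l(t)‖² when l(s) ≠ l(t) and K(s,t) = (1/2)·l''(s)·n(s) when l(s) = l(t) (this extension makes t ↦ K(s,t) continuous); and (ii) lim_{ε→0⁺} ∫_{{t ∈ [s − L/2, s + L/2] : |t − s| ≥ ε}} ((l(s) − l(t))·l'(t))/‖l(s) − l(t)‖² dt = 0. -/

import Mathlib

open Real MeasureTheory Filter Topology

/-- Dot product of two points of the plane `ℝ² ≃ ℂ`. -/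
noncomputable def dotR (z w : ℂ) : ℝ := z.re * w.re + z.im * w.im

/-- The unit normal vector `n(s) = (l₂'(s), -l₁'(s))` of a curve `l`. -/
noncomputable def normalv (l : ℝ → ℂ) (s : ℝ) : ℂ := -Complex.I * deriv l s

open Classical in
/-- The double layer kernel `K(s,t) = ((l(s) - l(t))·n(t))/‖l(s) - l(t)‖²`, extended
continuously through the diagonal by `(1/2)·l''(s)·n(s)`. -/
noncomputable def Kdl (l : ℝ → ℂ) (s t : ℝ) : ℝ :=
  if l s = l t then (1/2) * dotR (deriv (deriv l) s) (normalv l s)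
  else dotR (l s - l t) (normalv l t) / ‖l s - l t‖ ^ 2

/-!
Fix `s`. The chord slope `g u = (l (s + u) - l s) / u`, with `g 0 = l' s`, is a `C¹` function
without zeros on `|u| < L`, and `l' (s + u) / (l (s + u) - l s) = 1 / u + g' u / g u`. The kernels
of (i) and (ii) are minus the imaginary and the real part of the left-hand side. Since `1 / u` is
real and odd, both integrals are read off `P s = ∫ g' / g` over `[-L/2, L/2]`, and the claim is
`P s = π i`.

Closedness of the curve gives `g (-L/2) = -g (L/2)`, so `exp (P s) = -1`, and `P` is constant by
continuity. If `l s` is a leftmost point of the curve, then `g u` lies in the right half plane for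
`u > 0` and in the left one for `u < 0`; this turns the increment of `log g` into `± π i`. If `l s`
is a point of the curve nearest to `z`, the same happens for `(l (s + u) - z) / g u`, so
`∫ l' / (l - z)` and `P s` differ by `± π i`. When `∫ l' / (l - z) = 2 π i`, the only common value
is `P = π i`.
-/

open Set

section Periodic

theorem injOn_Ico_add_of_periodic {G α : Type*} [AddCommGroup G] [LinearOrder G]
    [IsOrderedAddMonoid G] [Archimedean G] {f : G → α} {p a : G} (hp : 0 < p)
    (hf : Function.Periodic f p) (hinj : InjOn f (Ico a (a + p))) (b : G) :
    InjOn f (Ico b (b + p)) := by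
  have map_toIcoMod (x : G) : f (toIcoMod hp a x) = f x := hf.sub_zsmul_eq _
  intro x hx y hy hxy
  have hmod : toIcoMod hp a x = toIcoMod hp a y :=
    hinj (toIcoMod_mem_Ico hp a x) (toIcoMod_mem_Ico hp a y)
      (by rw [map_toIcoMod, map_toIcoMod, hxy])
  rwa [toIcoMod_inj, ← toIcoMod_inj hp (c := b), (toIcoMod_eq_self hp).2 hx,
    (toIcoMod_eq_self hp).2 hy] at hmod

theorem exists_forall_le_of_periodic {α : Type*} [LinearOrder α] [TopologicalSpace α]
    [ClosedIicTopology α] {f : ℝ → α} {p : ℝ} (hf : Function.Periodic f p) (hp : p ≠ 0)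
    (hc : Continuous f) : ∃ s, ∀ t, f s ≤ f t := by
  obtain ⟨_, ⟨s, rfl⟩, hs⟩ := (hf.compact_of_continuous hp hc).exists_isLeast (range_nonempty f)
  exact ⟨s, fun t => hs (mem_range_self t)⟩

theorem apply_add_neg_half_of_periodic {E : Type*} {f : ℝ → E} {p : ℝ}
    (hf : Function.Periodic f p) (s : ℝ) : f (s + -(p / 2)) = f (s + p / 2) := by
  rw [← hf (s + -(p / 2))]
  ring_nf

theorem periodic_deriv {𝕜 F : Type*} [NontriviallyNormedField 𝕜] [NormedAddCommGroup F]
    [NormedSpace 𝕜 F] {f : 𝕜 → F} {c : 𝕜} (hf : Function.Periodic f c) :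
    Function.Periodic (deriv f) c := fun x => by
  rw [← deriv_comp_add_const, hf.funext]

theorem periodic_deriv_div_sub {𝕜 : Type*} [NontriviallyNormedField 𝕜] {𝕜' : Type*}
    [NontriviallyNormedField 𝕜'] [NormedAlgebra 𝕜 𝕜'] {f : 𝕜 → 𝕜'} {c : 𝕜}
    (hf : Function.Periodic f c) (z : 𝕜') : Function.Periodic (fun x => deriv f x / (f x - z)) c :=
  (periodic_deriv hf).div (hf.comp (· - z))

theorem intervalIntegral_eq_integral_add_of_periodic {E : Type*} [NormedAddCommGroup E]
    [NormedSpace ℝ E] {f : ℝ → E} {p : ℝ} (hf : Function.Periodic f p) (s : ℝ) :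
    ∫ t in (0 : ℝ)..p, f t = ∫ u in (-(p / 2))..(p / 2), f (s + u) := by
  rw [intervalIntegral.integral_comp_add_left, show s + p / 2 = s + -(p / 2) + p by ring,
    hf.intervalIntegral_add_eq (s + -(p / 2)) 0, zero_add]

end Periodic

section Integrals

theorem continuous_intervalIntegral_of_continuousOn {X E : Type*} [TopologicalSpace X]
    [FirstCountableTopology X] [LocallyCompactSpace X] [NormedAddCommGroup E] [NormedSpace ℝ E]
    {f : X → ℝ → E} {a b : ℝ} (hab : a ≤ b)
    (hf : ContinuousOn (Function.uncurry f) (univ ×ˢ Icc a b)) :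
    Continuous fun x => ∫ u in a..b, f x u := by
  have hproj : Continuous (Function.uncurry fun x u => f x (projIcc a b hab u)) :=
    hf.comp_continuous (f := fun p : X × ℝ => (p.1, (projIcc a b hab p.2 : ℝ)))
      (by fun_prop) fun p => ⟨mem_univ _, (projIcc a b hab p.2).2⟩
  refine (intervalIntegral.continuous_parametric_intervalIntegral_of_continuous' hproj a b).congr
    fun x => intervalIntegral.integral_congr fun u hu => ?_
  rw [uIcc_of_le hab] at hu
  simp only [projIcc_of_mem hab hu]

theorem setIntegral_eq_zero_of_odd {G E : Type*} [AddGroup G] [MeasurableSpace G] [MeasurableNeg G]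
    [NormedAddCommGroup E] [NormedSpace ℝ E] {μ : Measure G} [μ.IsNegInvariant] {ψ : G → E}
    (hψ : Function.Odd ψ) {A : Set G} (hA : -A = A) : ∫ u in A, ψ u ∂μ = 0 := by
  have hneg := (Measure.measurePreserving_neg μ).setIntegral_preimage_emb
    (MeasurableEquiv.neg G).measurableEmbedding ψ A
  rw [neg_preimage, hA, integral_congr_ae (ae_of_all _ hψ), integral_neg] at hneg
  have : IsAddTorsionFree E := .of_isTorsionFree ℝ E
  exact self_eq_neg.1 hneg.symm

theorem tendsto_setIntegral_odd_add {E : Type*} [NormedAddCommGroup E] [NormedSpace ℝ E]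
    {ψ φ : ℝ → E} {a : ℝ} (hψ : Function.Odd ψ)
    (hψi : ∀ ε > 0, IntegrableOn ψ {u | u ∈ Icc (-a) a ∧ ε ≤ |u|})
    (hφ : IntegrableOn φ (Icc (-a) a)) :
    Tendsto (fun ε : ℝ => ∫ u in {u | u ∈ Icc (-a) a ∧ ε ≤ |u|}, (ψ u + φ u))
      (𝓝[>] 0) (𝓝 (∫ u in Icc (-a) a, φ u)) := by
  have meas_abs (ε : ℝ) : MeasurableSet {u : ℝ | ε ≤ |u|} :=
    measurableSet_le measurable_const measurable_id.abs
  have cover : AECover (volume.restrict (Icc (-a) a)) (𝓝[>] 0) fun ε : ℝ => {u : ℝ | ε ≤ |u|} := by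
    refine ⟨ae_restrict_of_ae ?_, meas_abs⟩
    filter_upwards [Measure.ae_ne volume (0 : ℝ)] with u hu
    filter_upwards [Ioo_mem_nhdsGT (abs_pos.2 hu)] with ε hε using hε.2.le
  refine (cover.integral_tendsto_of_countably_generated hφ).congr' ?_
  filter_upwards [self_mem_nhdsWithin] with ε hε
  have symm : -{u | u ∈ Icc (-a) a ∧ ε ≤ |u|} = {u | u ∈ Icc (-a) a ∧ ε ≤ |u|} := by
    ext u
    simp only [Set.mem_neg, mem_ofPred_eq, mem_Icc, abs_neg, neg_le_neg_iff, neg_le (b := u),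
      and_comm (a := u ≤ a)]
  rw [integral_add (hψi ε hε) (hφ.mono_set fun u hu => hu.1), setIntegral_eq_zero_of_odd hψ symm,
    zero_add, Measure.restrict_restrict (meas_abs ε), inter_comm]
  rfl

end Integrals

section LogDeriv

theorem cexp_integral_logDeriv {f : ℝ → ℂ} {a b : ℝ} (hab : a ≤ b)
    (hd : ∀ x ∈ Icc a b, DifferentiableAt ℝ f x) (hc : ContinuousOn (logDeriv f) (Icc a b))
    (hne : ∀ x ∈ Icc a b, f x ≠ 0) : Complex.exp (∫ x in a..b, logDeriv f x) = f b / f a := by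
  set φ : ℝ → ℂ := IccExtend hab ((Icc a b).domRestrict (logDeriv f))
  have hφ : Continuous φ := hc.domRestrict.Icc_extend'
  have φ_eq {x : ℝ} (hx : x ∈ Icc a b) : φ x = logDeriv f x := IccExtend_of_mem hab _ hx
  set Φ : ℝ → ℂ := fun x => ∫ t in a..x, φ t
  have hΦ (x : ℝ) : HasDerivAt Φ (φ x) x := (hφ.integral_hasStrictDerivAt a x).hasDerivAt
  have hF {x : ℝ} (hx : x ∈ Icc a b) : HasDerivAt (fun x => f x * Complex.exp (-Φ x)) 0 x := by
    refine ((hd x hx).hasDerivAt.mul (hΦ x).neg.cexp).congr_deriv ?_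
    rw [φ_eq hx, logDeriv_apply]
    field_simp [hne x hx]
    ring
  have hconst : f b * Complex.exp (-Φ b) = f a := by
    simpa [Φ] using constant_of_has_deriv_right_zero
      (fun x hx => (hF hx).continuousAt.continuousWithinAt)
      (fun x hx => (hF (Ico_subset_Icc_self hx)).hasDerivWithinAt) b ⟨hab, le_rfl⟩
  have hint : ∫ x in a..b, logDeriv f x = Φ b :=
    intervalIntegral.integral_congr fun x hx => (φ_eq (by rwa [uIcc_of_le hab] at hx)).symm
  rw [hint, eq_div_iff (hne a ⟨le_rfl, hab⟩), ← hconst, mul_left_comm, ← Complex.exp_add,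
    add_neg_cancel, Complex.exp_zero, mul_one]

theorem integral_logDeriv_eq_log_sub_log {f : ℝ → ℂ} {a b : ℝ}
    (hd : ∀ x ∈ uIcc a b, DifferentiableAt ℝ f x) (hslit : ∀ x ∈ uIcc a b, f x ∈ Complex.slitPlane)
    (hint : IntervalIntegrable (logDeriv f) volume a b) :
    ∫ x in a..b, logDeriv f x = Complex.log (f b) - Complex.log (f a) :=
  intervalIntegral.integral_eq_sub_of_hasDerivAt
    (fun x hx => (hd x hx).hasDerivAt.clog_real (hslit x hx)) hint

theorem mem_slitPlane_of_re_nonneg {z : ℂ} (hz : z ≠ 0) (hre : 0 ≤ z.re) :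
    z ∈ Complex.slitPlane := by
  rcases hre.lt_or_eq with hpos | hzero
  · exact Or.inl hpos
  · exact Or.inr fun him => hz (Complex.ext hzero.symm him)

theorem mul_re_nonneg_of_norm_sub_le {w : ℂ} {u : ℝ} (h : ‖w - u‖ ≤ ‖w‖) : 0 ≤ u * w.re := by
  have hsq := Complex.normSq_sub w u
  rw [Complex.conj_ofReal, Complex.re_mul_ofReal, Complex.normSq_eq_norm_sq,
    Complex.normSq_eq_norm_sq, Complex.normSq_ofReal] at hsq
  nlinarith [pow_le_pow_left₀ (norm_nonneg _) h 2, mul_self_nonneg u]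

theorem log_neg_sub_log_eq_or {z : ℂ} (hz : z ∈ Complex.slitPlane) (hz' : -z ∈ Complex.slitPlane) :
    Complex.log (-z) - Complex.log z = π * Complex.I ∨
      Complex.log (-z) - Complex.log z = -(π * Complex.I) := by
  simp only [Complex.log, norm_neg, add_sub_add_left_eq_sub, ← sub_mul]
  rcases lt_trichotomy z.im 0 with him | him | him
  · left
    rw [Complex.arg_neg_eq_arg_add_pi_of_im_neg him]
    push_cast
    ring
  · simp only [Complex.mem_slitPlane_iff, Complex.neg_re, Complex.neg_im, him, neg_zero, ne_eq,
      not_true_eq_false, or_false] at hz hz'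
    linarith
  · right
    rw [Complex.arg_neg_eq_arg_sub_pi_of_im_pos him]
    push_cast
    ring

theorem mem_slitPlane_of_forall_mul_re_nonneg {f : ℝ → ℂ} {a : ℝ} (ha : 0 < a)
    (hc : ContinuousOn f (Icc 0 a)) (hne : ∀ u ∈ Icc 0 a, f u ≠ 0)
    (hre : ∀ u ∈ Icc 0 a, 0 ≤ u * (f u).re) : ∀ u ∈ Icc 0 a, f u ∈ Complex.slitPlane := by
  intro u hu
  refine mem_slitPlane_of_re_nonneg (hne u hu) ?_
  have hclosure : closure (Ioc 0 a) = Icc 0 a := closure_Ioc ha.ne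
  rw [← hclosure] at hu hc
  exact le_on_closure
    (fun v hv => nonneg_of_mul_nonneg_right (hre v (Ioc_subset_Icc_self hv)) hv.1)
    continuousOn_const (Complex.continuous_re.comp_continuousOn hc) hu

theorem integral_logDeriv_eq_pi_mul_I_or_neg {f : ℝ → ℂ} {a : ℝ} (ha : 0 < a)
    (hd : ∀ u ∈ Icc (-a) a, DifferentiableAt ℝ f u)
    (hc : ContinuousOn (logDeriv f) (Icc (-a) a)) (hne : ∀ u ∈ Icc (-a) a, f u ≠ 0)
    (hre : ∀ u ∈ Icc (-a) a, 0 ≤ u * (f u).re) (hends : f (-a) = -f a) :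
    (∫ u in (-a)..a, logDeriv f u) = π * Complex.I ∨
      (∫ u in (-a)..a, logDeriv f u) = -(π * Complex.I) := by
  have right_sub : Icc 0 a ⊆ Icc (-a) a := Icc_subset_Icc_left (by linarith)
  have left_sub : Icc (-a) 0 ⊆ Icc (-a) a := Icc_subset_Icc_right ha.le
  have neg_mem {v : ℝ} (hv : v ∈ Icc 0 a) : -v ∈ Icc (-a) a :=
    ⟨neg_le_neg hv.2, by linarith [hv.1]⟩
  have cont : ContinuousOn f (Icc (-a) a) :=
    fun u hu => (hd u hu).continuousAt.continuousWithinAt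
  have right_slit := mem_slitPlane_of_forall_mul_re_nonneg ha (cont.mono right_sub)
    (fun u hu => hne u (right_sub hu)) fun u hu => hre u (right_sub hu)
  have left_slit (u : ℝ) (hu : u ∈ Icc (-a) 0) : -f u ∈ Complex.slitPlane := by
    have := mem_slitPlane_of_forall_mul_re_nonneg (f := fun v => -f (-v)) ha
      (cont.comp continuousOn_neg fun v => neg_mem).neg
      (fun v hv => neg_ne_zero.2 (hne (-v) (neg_mem hv)))
      (fun v hv => by simpa using hre (-v) (neg_mem hv)) (-u) ⟨neg_nonneg.2 hu.2, neg_le.1 hu.1⟩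
    simpa only [neg_neg] using this
  have logDeriv_neg : logDeriv (-f) = logDeriv f := by
    ext u
    simp only [logDeriv_apply, deriv.neg, Pi.neg_apply, neg_div_neg_eq]
  rw [← uIcc_of_le ha.le] at right_sub right_slit
  rw [← uIcc_of_le (neg_nonpos.2 ha.le)] at left_sub left_slit
  have int_right := (hc.mono right_sub).intervalIntegrable (μ := volume)
  have int_left := (hc.mono left_sub).intervalIntegrable (μ := volume)
  have eq_right := integral_logDeriv_eq_log_sub_log (fun u hu => hd u (right_sub hu)) right_slit
    int_right
  have eq_left := integral_logDeriv_eq_log_sub_log (f := -f) (fun u hu => (hd u (left_sub hu)).neg)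
    left_slit (logDeriv_neg ▸ int_left)
  rw [logDeriv_neg, Pi.neg_apply, Pi.neg_apply, hends, neg_neg] at eq_left
  rw [← intervalIntegral.integral_add_adjacent_intervals int_left int_right, eq_left, eq_right,
    sub_add_sub_cancel]
  exact log_neg_sub_log_eq_or (right_slit 0 left_mem_uIcc) (left_slit 0 right_mem_uIcc)

end LogDeriv

section ChordSlope

variable {E : Type*} [NormedAddCommGroup E] [NormedSpace ℝ E] {l : ℝ → E}

/-- The slope `(l (s + u) - l s) / u` of the chord of `l` from `s` to `s + u`, written as a mean of
the derivative so that it is defined and smooth also at `u = 0`. -/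
noncomputable def chordSlope (l : ℝ → E) (s u : ℝ) : E := ∫ θ in (0 : ℝ)..1, deriv l (s + θ * u)

theorem continuous_chordSlope (hl : ContDiff ℝ 1 l) :
    Continuous fun p : ℝ × ℝ => chordSlope l p.1 p.2 := by
  have := hl.continuous_deriv le_rfl
  unfold chordSlope
  fun_prop

variable [CompleteSpace E]

theorem chordSlope_zero (l : ℝ → E) (s : ℝ) : chordSlope l s 0 = deriv l s := by
  simp [chordSlope]

theorem smul_chordSlope (hl : ContDiff ℝ 1 l) (s u : ℝ) :
    u • chordSlope l s u = l (s + u) - l s := by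
  have := hl.continuous_deriv le_rfl
  exact intervalIntegral.integral_unitInterval_deriv_eq_sub (f' := deriv l) (by fun_prop)
    fun θ _ => (hl.differentiable one_ne_zero _).hasDerivAt

theorem mul_chordSlope {l : ℝ → ℂ} (hl : ContDiff ℝ 1 l) (s u : ℝ) :
    u * chordSlope l s u = l (s + u) - l s := by
  rw [← smul_chordSlope hl, Complex.real_smul]

theorem smul_integral_smul_deriv_deriv (hl : ContDiff ℝ 2 l) (s u : ℝ) :
    u • ∫ θ in (0 : ℝ)..1, θ • deriv (deriv l) (s + θ * u) =
      deriv l (s + u) - chordSlope l s u := by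
  have hl' : ContDiff ℝ 1 (deriv l) := hl.deriv'
  have := hl'.continuous
  have := hl'.continuous_deriv le_rfl
  have hderiv (θ : ℝ) : HasDerivAt (fun θ => θ • deriv l (s + θ * u))
      (u • θ • deriv (deriv l) (s + θ * u) + deriv l (s + θ * u)) θ := by
    have hlin : HasDerivAt (fun θ => s + θ * u) u θ := (hasDerivAt_mul_const u).const_add s
    have hcomp := (hl'.differentiable one_ne_zero (s + θ * u)).hasDerivAt.scomp θ hlin
    simpa only [id, one_smul, smul_comm θ u, Function.comp_def] using
      (hasDerivAt_id θ).fun_smul hcomp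
  have hftc := intervalIntegral.integral_eq_sub_of_hasDerivAt (a := 0) (b := 1)
    (fun θ _ => hderiv θ) (Continuous.intervalIntegrable (by fun_prop) 0 1)
  rw [intervalIntegral.integral_add (Continuous.intervalIntegrable (by fun_prop) 0 1)
    (Continuous.intervalIntegrable (by fun_prop) 0 1), intervalIntegral.integral_smul] at hftc
  rw [eq_sub_iff_add_eq]
  simpa [chordSlope] using hftc

theorem hasDerivAt_chordSlope (hl : ContDiff ℝ 2 l) (s u : ℝ) :
    HasDerivAt (chordSlope l s) (∫ θ in (0 : ℝ)..1, θ • deriv (deriv l) (s + θ * u)) u := by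
  have hl₁ : ContDiff ℝ 1 l := hl.of_le one_le_two
  have : Continuous (deriv (deriv l)) := hl.deriv'.continuous_deriv le_rfl
  refine hasDerivAt_of_hasDerivAt_of_ne' (x := 0) (fun v hv => ?_)
    ((continuous_chordSlope hl₁).comp (.prodMk_right s)).continuousAt
    (Continuous.continuousAt (by fun_prop) : ContinuousAt
      (fun u => ∫ θ in (0 : ℝ)..1, θ • deriv (deriv l) (s + θ * u)) 0) u
  have hchord : chordSlope l s =ᶠ[𝓝 v] fun v => v⁻¹ • (l (s + v) - l s) := by
    filter_upwards [isOpen_ne.mem_nhds hv] with w hw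
    rw [← smul_chordSlope hl₁, inv_smul_smul₀ hw]
  have hsub : HasDerivAt (fun v => l (s + v) - l s) (deriv l (s + v)) v :=
    ((hl₁.differentiable one_ne_zero _).hasDerivAt.comp_const_add s v).sub_const _
  refine (((hasDerivAt_inv hv).smul hsub).congr_deriv ?_).congr_of_eventuallyEq hchord
  rw [eq_comm, ← inv_smul_smul₀ hv (∫ θ in (0 : ℝ)..1, _), smul_integral_smul_deriv_deriv hl,
    ← smul_chordSlope hl₁, smul_smul, smul_sub, sub_eq_add_neg, ← neg_smul]
  congr 2
  field_simp

theorem differentiable_chordSlope (hl : ContDiff ℝ 2 l) (s : ℝ) :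
    Differentiable ℝ (chordSlope l s) :=
  fun u => (hasDerivAt_chordSlope hl s u).differentiableAt

theorem continuous_deriv_chordSlope (hl : ContDiff ℝ 2 l) :
    Continuous fun p : ℝ × ℝ => deriv (chordSlope l p.1) p.2 := by
  have : Continuous (deriv (deriv l)) := hl.deriv'.continuous_deriv le_rfl
  simp only [(hasDerivAt_chordSlope hl _ _).deriv]
  fun_prop

end ChordSlope

theorem abs_lt_of_mem_Icc_half {a u : ℝ} (ha : 0 < a) (hu : u ∈ Icc (-(a / 2)) (a / 2)) :
    |u| < a :=
  (abs_le.2 hu).trans_lt (half_lt_self ha)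

/-- A regular simple closed curve of class `C²`, encoded as a parametrization `l` of the whole line
with period `L`; the speed need not be constant. -/
structure IsRegularSimpleClosedCurve {E : Type*} [NormedAddCommGroup E] [NormedSpace ℝ E] (L : ℝ)
    (l : ℝ → E) : Prop where
  pos : 0 < L
  contDiff : ContDiff ℝ 2 l
  periodic : Function.Periodic l L
  deriv_ne_zero (s : ℝ) : deriv l s ≠ 0
  injOn : InjOn l (Ico 0 L)

/-- The total change of a continuous logarithm of `chordSlope l s` over the period of the curve
centered at `s`. Its imaginary and real parts are the integrals of the two kernels, up to sign. -/
noncomputable def chordLogIntegral (L : ℝ) (l : ℝ → ℂ) (s : ℝ) : ℂ :=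
  ∫ u in (-(L / 2))..(L / 2), logDeriv (chordSlope l s) u

namespace IsRegularSimpleClosedCurve

section NormedSpace

variable {E : Type*} [NormedAddCommGroup E] [NormedSpace ℝ E] {L : ℝ} {l : ℝ → E}

theorem differentiable (h : IsRegularSimpleClosedCurve L l) : Differentiable ℝ l :=
  h.contDiff.differentiable two_ne_zero

theorem contDiff_one (h : IsRegularSimpleClosedCurve L l) : ContDiff ℝ 1 l :=
  h.contDiff.of_le one_le_two

theorem apply_add_ne (h : IsRegularSimpleClosedCurve L l) {u : ℝ} (hu : u ≠ 0) (huL : |u| < L)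
    (s : ℝ) : l (s + u) ≠ l s := by
  rw [abs_lt] at huL
  refine (injOn_Ico_add_of_periodic (a := 0) h.pos h.periodic (by simpa using h.injOn)
    (s + min 0 u)).ne ?_ ?_ (by simpa using hu)
  all_goals
    rw [mem_Ico]
    rcases min_cases 0 u with ⟨hmin, _⟩ | ⟨hmin, _⟩ <;> rw [hmin] <;> constructor <;> linarith

variable [CompleteSpace E]

theorem chordSlope_ne_zero (h : IsRegularSimpleClosedCurve L l) {u : ℝ} (huL : |u| < L) (s : ℝ) :
    chordSlope l s u ≠ 0 := by
  rcases eq_or_ne u 0 with rfl | hu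
  · rw [chordSlope_zero]
    exact h.deriv_ne_zero s
  · have hne := sub_ne_zero.2 (h.apply_add_ne hu huL s)
    rw [← smul_chordSlope h.contDiff_one] at hne
    exact right_ne_zero_of_smul hne

theorem chordSlope_neg_half (h : IsRegularSimpleClosedCurve L l) (s : ℝ) :
    chordSlope l s (-(L / 2)) = -chordSlope l s (L / 2) := by
  have hl := h.contDiff_one
  refine smul_right_injective E (neg_ne_zero.2 (half_pos h.pos).ne') ?_
  calc -(L / 2) • chordSlope l s (-(L / 2)) = l (s + -(L / 2)) - l s := smul_chordSlope hl s _
    _ = l (s + L / 2) - l s := by rw [apply_add_neg_half_of_periodic h.periodic]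
    _ = (L / 2) • chordSlope l s (L / 2) := (smul_chordSlope hl s _).symm
    _ = -(L / 2) • -chordSlope l s (L / 2) := (neg_smul_neg _ _).symm

end NormedSpace

variable {L : ℝ} {l : ℝ → ℂ}

theorem deriv_div_sub_eq_inv_add_logDeriv (h : IsRegularSimpleClosedCurve L l) {u : ℝ} (hu : u ≠ 0)
    (huL : |u| < L) (s : ℝ) :
    deriv l (s + u) / (l (s + u) - l s) = (u : ℂ)⁻¹ + logDeriv (chordSlope l s) u := by
  have hu' : (u : ℂ) ≠ 0 := Complex.ofReal_ne_zero.2 hu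
  have hg := h.chordSlope_ne_zero huL s
  have hderiv : u * deriv (chordSlope l s) u = deriv l (s + u) - chordSlope l s u := by
    rw [(hasDerivAt_chordSlope h.contDiff s u).deriv, ← smul_integral_smul_deriv_deriv h.contDiff,
      Complex.real_smul]
  rw [logDeriv_apply, ← mul_chordSlope h.contDiff_one,
    ← sub_add_cancel (deriv l (s + u)) (chordSlope l s u), ← hderiv]
  field_simp
  ring

theorem continuousOn_logDeriv_chordSlope (h : IsRegularSimpleClosedCurve L l) :
    ContinuousOn (Function.uncurry fun s => logDeriv (chordSlope l s))
      (univ ×ˢ Icc (-(L / 2)) (L / 2)) :=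
  (continuous_deriv_chordSlope h.contDiff).continuousOn.div
    (continuous_chordSlope h.contDiff_one).continuousOn
    fun p hp => h.chordSlope_ne_zero (abs_lt_of_mem_Icc_half h.pos hp.2) p.1

theorem continuousOn_logDeriv_chordSlope_right (h : IsRegularSimpleClosedCurve L l) (s : ℝ) :
    ContinuousOn (logDeriv (chordSlope l s)) (Icc (-(L / 2)) (L / 2)) :=
  h.continuousOn_logDeriv_chordSlope.uncurry_left s (mem_univ s)

theorem cexp_chordLogIntegral (h : IsRegularSimpleClosedCurve L l) (s : ℝ) :
    Complex.exp (chordLogIntegral L l s) = -1 := by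
  have hle : -(L / 2) ≤ L / 2 := by linarith [h.pos]
  have chord_ne (u : ℝ) (hu : u ∈ Icc (-(L / 2)) (L / 2)) : chordSlope l s u ≠ 0 :=
    h.chordSlope_ne_zero (abs_lt_of_mem_Icc_half h.pos hu) s
  rw [chordLogIntegral, cexp_integral_logDeriv hle
    (fun u _ => differentiable_chordSlope h.contDiff s u)
    (h.continuousOn_logDeriv_chordSlope_right s) chord_ne, h.chordSlope_neg_half, div_neg,
    div_self (chord_ne _ (right_mem_Icc.2 hle))]

theorem chordLogIntegral_eq (h : IsRegularSimpleClosedCurve L l) (s t : ℝ) :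
    chordLogIntegral L l s = chordLogIntegral L l t := by
  have hL := h.pos
  refine Complex.isCoveringMap_exp.const_of_comp
    (continuous_intervalIntegral_of_continuousOn (by linarith) h.continuousOn_logDeriv_chordSlope)
    (fun x y => Subtype.ext ?_) s t
  exact (h.cexp_chordLogIntegral x).trans (h.cexp_chordLogIntegral y).symm

theorem chordLogIntegral_eq_pi_mul_I_or_neg (h : IsRegularSimpleClosedCurve L l) (s : ℝ) :
    chordLogIntegral L l s = π * Complex.I ∨ chordLogIntegral L l s = -(π * Complex.I) := by
  obtain ⟨a, leftmost⟩ : ∃ a, ∀ t, (l a).re ≤ (l t).re :=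
    exists_forall_le_of_periodic (h.periodic.comp Complex.re) h.pos.ne'
      (Complex.continuous_re.comp h.contDiff.continuous)
  rw [h.chordLogIntegral_eq s a]
  refine integral_logDeriv_eq_pi_mul_I_or_neg (half_pos h.pos)
    (fun u _ => differentiable_chordSlope h.contDiff a u)
    (h.continuousOn_logDeriv_chordSlope_right a)
    (fun u hu => h.chordSlope_ne_zero (abs_lt_of_mem_Icc_half h.pos hu) a) (fun u _ => ?_)
    (h.chordSlope_neg_half a)
  rw [← Complex.re_ofReal_mul, mul_chordSlope h.contDiff_one, Complex.sub_re]
  exact sub_nonneg.2 (leftmost _)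

theorem mul_re_sub_div_chordSlope_nonneg (h : IsRegularSimpleClosedCurve L l) {z : ℂ} {s u : ℝ}
    (huL : |u| < L) (hnear : ‖l s - z‖ ≤ ‖l (s + u) - z‖) :
    0 ≤ u * ((l (s + u) - z) / chordSlope l s u).re := by
  have hg := h.chordSlope_ne_zero huL s
  refine mul_re_nonneg_of_norm_sub_le ?_
  rw [div_sub' hg, norm_div, norm_div, mul_comm, mul_chordSlope h.contDiff_one]
  gcongr
  simpa using hnear

theorem hasDerivAt_add_sub (h : IsRegularSimpleClosedCurve L l) (s : ℝ) (z : ℂ) (u : ℝ) :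
    HasDerivAt (fun u => l (s + u) - z) (deriv l (s + u)) u :=
  ((h.differentiable (s + u)).hasDerivAt.comp_const_add s u).sub_const z

theorem logDeriv_sub_div_chordSlope (h : IsRegularSimpleClosedCurve L l) {z : ℂ} {s u : ℝ}
    (huL : |u| < L) (hz : l (s + u) ≠ z) :
    logDeriv (fun u => (l (s + u) - z) / chordSlope l s u) u =
      deriv l (s + u) / (l (s + u) - z) - logDeriv (chordSlope l s) u := by
  have hsub := h.hasDerivAt_add_sub s z u
  rw [logDeriv_div (f := fun u => l (s + u) - z) u (sub_ne_zero.2 hz)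
    (h.chordSlope_ne_zero huL s) hsub.differentiableAt (differentiable_chordSlope h.contDiff s u),
    logDeriv_apply (fun u => l (s + u) - z), hsub.deriv]

theorem continuous_deriv_div_sub (h : IsRegularSimpleClosedCurve L l) {z : ℂ} (hz : ∀ t, l t ≠ z) :
    Continuous fun t => deriv l t / (l t - z) :=
  (h.contDiff.continuous_deriv one_le_two).div (h.contDiff.continuous.sub continuous_const)
    fun t => sub_ne_zero.2 (hz t)

theorem integral_deriv_div_sub_sub_chordLogIntegral (h : IsRegularSimpleClosedCurve L l) {z : ℂ}
    (hz : ∀ t, l t ≠ z) (s : ℝ) :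
    (∫ t in (0 : ℝ)..L, deriv l t / (l t - z)) - chordLogIntegral L l s =
      ∫ u in (-(L / 2))..(L / 2), logDeriv (fun u => (l (s + u) - z) / chordSlope l s u) u := by
  have hle : -(L / 2) ≤ L / 2 := by linarith [h.pos]
  have cont_quot : Continuous fun u => deriv l (s + u) / (l (s + u) - z) :=
    (h.continuous_deriv_div_sub hz).comp (continuous_const_add s)
  have cont_logDeriv := h.continuousOn_logDeriv_chordSlope_right s
  rw [intervalIntegral_eq_integral_add_of_periodic (periodic_deriv_div_sub h.periodic z) s,
    chordLogIntegral, ← intervalIntegral.integral_sub (cont_quot.intervalIntegrable _ _)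
      (cont_logDeriv.intervalIntegrable_of_Icc hle)]
  refine intervalIntegral.integral_congr fun u hu => ?_
  rw [uIcc_of_le hle] at hu
  exact (h.logDeriv_sub_div_chordSlope (abs_lt_of_mem_Icc_half h.pos hu) (hz _)).symm

theorem integral_deriv_div_sub_sub_chordLogIntegral_eq_or (h : IsRegularSimpleClosedCurve L l)
    {z : ℂ} (hz : ∀ t, l t ≠ z) (s : ℝ) :
    (∫ t in (0 : ℝ)..L, deriv l t / (l t - z)) - chordLogIntegral L l s = π * Complex.I ∨
      (∫ t in (0 : ℝ)..L, deriv l t / (l t - z)) - chordLogIntegral L l s = -(π * Complex.I) := by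
  obtain ⟨a, nearest⟩ : ∃ a, ∀ t, ‖l a - z‖ ≤ ‖l t - z‖ :=
    exists_forall_le_of_periodic (h.periodic.comp fun w => ‖w - z‖) h.pos.ne'
      (h.contDiff.continuous.sub continuous_const).norm
  have chord_ne {u : ℝ} (hu : u ∈ Icc (-(L / 2)) (L / 2)) : chordSlope l a u ≠ 0 :=
    h.chordSlope_ne_zero (abs_lt_of_mem_Icc_half h.pos hu) a
  rw [h.chordLogIntegral_eq s a, h.integral_deriv_div_sub_sub_chordLogIntegral hz]
  refine integral_logDeriv_eq_pi_mul_I_or_neg (half_pos h.pos) (fun u hu => ?_) ?_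
    (fun u hu => div_ne_zero (sub_ne_zero.2 (hz _)) (chord_ne hu))
    (fun u hu => h.mul_re_sub_div_chordSlope_nonneg (abs_lt_of_mem_Icc_half h.pos hu) (nearest _))
    ?_
  · exact (h.hasDerivAt_add_sub a z u).differentiableAt.div
      (differentiable_chordSlope h.contDiff a u) (chord_ne hu)
  · refine (((h.continuous_deriv_div_sub hz).comp (continuous_const_add a)).continuousOn.sub
      (h.continuousOn_logDeriv_chordSlope_right a)).congr fun u hu => ?_
    exact h.logDeriv_sub_div_chordSlope (abs_lt_of_mem_Icc_half h.pos hu) (hz _)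
  · rw [h.chordSlope_neg_half, apply_add_neg_half_of_periodic h.periodic, div_neg]

theorem chordLogIntegral_eq_pi_mul_I (h : IsRegularSimpleClosedCurve L l)
    (horient : ∃ z₀ : ℂ, (∀ s, l s ≠ z₀) ∧
      (∫ t in (0 : ℝ)..L, deriv l t / (l t - z₀)) = 2 * (π : ℂ) * Complex.I) (s : ℝ) :
    chordLogIntegral L l s = π * Complex.I := by
  obtain ⟨z, hz, hwind⟩ := horient
  have hdiff := h.integral_deriv_div_sub_sub_chordLogIntegral_eq_or hz s
  rw [hwind] at hdiff
  refine (h.chordLogIntegral_eq_pi_mul_I_or_neg s).resolve_right fun hneg => ?_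
  have pi_mul_I_eq_zero : (π : ℂ) * Complex.I = 0 := by
    rw [hneg] at hdiff
    rcases hdiff with hdiff | hdiff
    · linear_combination hdiff / 2
    · linear_combination hdiff / 4
  simp [pi_ne_zero] at pi_mul_I_eq_zero

end IsRegularSimpleClosedCurve

section Kernels

variable {L : ℝ} {l : ℝ → ℂ}

theorem dotR_div_norm_sq (z w : ℂ) : dotR z w / ‖z‖ ^ 2 = (w / z).re := by
  rw [dotR, Complex.div_re, ← Complex.normSq_eq_norm_sq]
  ring

theorem dotR_neg_I_mul_div_norm_sq (z w : ℂ) : dotR z (-Complex.I * w) / ‖z‖ ^ 2 = (w / z).im := by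
  rw [dotR_div_norm_sq, mul_div_assoc, neg_mul, Complex.neg_re, Complex.I_mul_re, neg_neg]

theorem Kdl_eq_neg_im {s t : ℝ} (hne : l t ≠ l s) :
    Kdl l s t = -(deriv l t / (l t - l s)).im := by
  rw [Kdl, if_neg hne.symm, normalv, dotR_neg_I_mul_div_norm_sq, ← neg_sub (l t), div_neg,
    Complex.neg_im]

theorem periodic_Kdl (hper : Function.Periodic l L) (s : ℝ) : Function.Periodic (Kdl l s) L := by
  intro t
  simp only [Kdl, normalv, hper t, periodic_deriv hper t]

theorem integral_Kdl (h : IsRegularSimpleClosedCurve L l) (s : ℝ) :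
    ∫ t in (0 : ℝ)..L, Kdl l s t = -(chordLogIntegral L l s).im := by
  have hle : -(L / 2) ≤ L / 2 := by linarith [h.pos]
  have hint := (h.continuousOn_logDeriv_chordSlope_right s).intervalIntegrable_of_Icc
    (μ := volume) hle
  have him : ∫ u in (-(L / 2))..(L / 2), (logDeriv (chordSlope l s) u).im =
      (chordLogIntegral L l s).im := Complex.imCLM.intervalIntegral_comp_comm hint
  rw [intervalIntegral_eq_integral_add_of_periodic (periodic_Kdl h.periodic s) s, ← him,
    ← intervalIntegral.integral_neg]
  refine intervalIntegral.integral_congr_ae ?_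
  filter_upwards [Measure.ae_ne volume (0 : ℝ)] with u hu hu_mem
  rw [uIoc_of_le hle] at hu_mem
  have huL := abs_lt_of_mem_Icc_half h.pos (Ioc_subset_Icc_self hu_mem)
  rw [Kdl_eq_neg_im (h.apply_add_ne hu huL s), h.deriv_div_sub_eq_inv_add_logDeriv hu huL,
    Complex.add_im, ← Complex.ofReal_inv, Complex.ofReal_im, zero_add]

theorem dotR_deriv_div_norm_sq_eq (h : IsRegularSimpleClosedCurve L l) {u : ℝ} (hu : u ≠ 0)
    (huL : |u| < L) (s : ℝ) :
    dotR (l s - l (s + u)) (deriv l (s + u)) / ‖l s - l (s + u)‖ ^ 2 =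
      -u⁻¹ + -(logDeriv (chordSlope l s) u).re := by
  rw [dotR_div_norm_sq, ← neg_sub (l (s + u)), div_neg, Complex.neg_re,
    h.deriv_div_sub_eq_inv_add_logDeriv hu huL, Complex.add_re, ← Complex.ofReal_inv,
    Complex.ofReal_re, neg_add]

theorem setIntegral_abs_sub_ge_eq_setIntegral_add {F : Type*} [NormedAddCommGroup F]
    [NormedSpace ℝ F] (f : ℝ → F) (s a ε : ℝ) :
    ∫ t in {t | t ∈ Icc (s - a) (s + a) ∧ ε ≤ |t - s|}, f t =
      ∫ u in {u | u ∈ Icc (-a) a ∧ ε ≤ |u|}, f (s + u) := by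
  rw [← (measurePreserving_add_left volume s).setIntegral_preimage_emb
    (measurableEmbedding_addLeft s)]
  congr 3
  ext u
  simp only [mem_preimage, mem_ofPred_eq, mem_Icc, add_sub_cancel_left, sub_eq_add_neg s,
    add_le_add_iff_left]

theorem integrableOn_inv_abs_ge {A : Set ℝ} (hA : MeasurableSet A) (hfin : volume A ≠ ⊤) {ε : ℝ}
    (hε : 0 < ε) (hge : ∀ u ∈ A, ε ≤ |u|) : IntegrableOn (fun u : ℝ => u⁻¹) A := by
  refine Measure.integrableOn_of_bounded (M := ε⁻¹) hfin measurable_inv.aestronglyMeasurable ?_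
  filter_upwards [ae_restrict_mem hA] with u hu
  rw [norm_inv, Real.norm_eq_abs]
  exact inv_anti₀ hε (hge u hu)

theorem measurableSet_Icc_abs_ge (a ε : ℝ) : MeasurableSet {u : ℝ | u ∈ Icc (-a) a ∧ ε ≤ |u|} :=
  measurableSet_Icc.inter (measurableSet_le measurable_const measurable_id.abs)

theorem tendsto_setIntegral_dotR_deriv (h : IsRegularSimpleClosedCurve L l) (s : ℝ) :
    Tendsto (fun ε : ℝ =>
        ∫ t in {t : ℝ | t ∈ Icc (s - L / 2) (s + L / 2) ∧ ε ≤ |t - s|},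
          dotR (l s - l t) (deriv l t) / ‖l s - l t‖ ^ 2)
      (𝓝[>] 0) (𝓝 (-(chordLogIntegral L l s).re)) := by
  have hle : -(L / 2) ≤ L / 2 := by linarith [h.pos]
  have cont := h.continuousOn_logDeriv_chordSlope_right s
  have hre : ∫ u in Icc (-(L / 2)) (L / 2), -(logDeriv (chordSlope l s) u).re =
      -(chordLogIntegral L l s).re := by
    rw [integral_neg, integral_Icc_eq_integral_Ioc, ← intervalIntegral.integral_of_le hle]
    exact congrArg Neg.neg <|
      Complex.reCLM.intervalIntegral_comp_comm (cont.intervalIntegrable_of_Icc hle)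
  rw [← hre]
  refine (tendsto_setIntegral_odd_add (ψ := fun u : ℝ => -u⁻¹) (fun u => by simp [inv_neg])
    (fun ε hε => ?_)
    (Complex.continuous_re.comp_continuousOn cont).neg.integrableOn_Icc).congr' ?_
  · exact (integrableOn_inv_abs_ge (measurableSet_Icc_abs_ge (L / 2) ε)
      (measure_ne_top_of_subset (fun u hu => hu.1) measure_Icc_lt_top.ne) hε fun u hu => hu.2).neg
  · filter_upwards [self_mem_nhdsWithin] with ε hε
    rw [setIntegral_abs_sub_ge_eq_setIntegral_add]
    refine setIntegral_congr_fun (measurableSet_Icc_abs_ge (L / 2) ε) fun u hu => ?_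
    exact (dotR_deriv_div_norm_sq_eq h (abs_pos.1 (lt_of_lt_of_le hε hu.2))
      (abs_lt_of_mem_Icc_half h.pos hu.1) s).symm

end Kernels

theorem double_layer_total_mass_general {L : ℝ} {l : ℝ → ℂ} (h : IsRegularSimpleClosedCurve L l)
    (horient : ∃ z₀ : ℂ, (∀ s, l s ≠ z₀) ∧
      (∫ t in (0 : ℝ)..L, deriv l t / (l t - z₀)) = 2 * (π : ℂ) * Complex.I) (s : ℝ) :
    (∫ t in (0 : ℝ)..L, Kdl l s t) = -π ∧
      Tendsto (fun ε : ℝ =>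
          ∫ t in {t : ℝ | t ∈ Icc (s - L / 2) (s + L / 2) ∧ ε ≤ |t - s|},
            dotR (l s - l t) (deriv l t) / ‖l s - l t‖ ^ 2)
        (𝓝[>] 0) (𝓝 0) := by
  have hP := h.chordLogIntegral_eq_pi_mul_I horient s
  constructor
  · simp [integral_Kdl h, hP]
  · simpa [hP] using tendsto_setIntegral_dotR_deriv h s

/-- The identities `A*1 = π` (total mass of the double layer kernel) and `B*1 = 0`
(principal value of the tangential kernel). -/
theorem double_layer_total_mass
    (L : ℝ) (hL : 0 < L) (l : ℝ → ℂ)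
    (hsm : ContDiff ℝ (⊤ : ℕ∞) l) (hper : ∀ s, l (s + L) = l s)
    (harc : ∀ s, ‖deriv l s‖ = 1) (hinj : Set.InjOn l (Set.Ico 0 L))
    (horient : ∃ z₀ : ℂ, (∀ s, l s ≠ z₀) ∧
      (∫ t in (0:ℝ)..L, deriv l t / (l t - z₀)) = 2 * (π : ℂ) * Complex.I) :
    ∀ s : ℝ,
      ((∫ t in (0:ℝ)..L, Kdl l s t) = -π) ∧
      Tendsto (fun ε : ℝ =>
          ∫ t in {t : ℝ | t ∈ Set.Icc (s - L/2) (s + L/2) ∧ ε ≤ |t - s|},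
            dotR (l s - l t) (deriv l t) / ‖l s - l t‖ ^ 2)
        (𝓝[>] 0) (𝓝 0) :=
  double_layer_total_mass_general
    ⟨hL, contDiff_infty.1 hsm 2, hper, fun s => norm_ne_zero_iff.1 (by simp [harc s]), hinj⟩
    horient
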